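/- Let p be an odd prime, θ ∈ ℤ_pˣ a unit which is not a square in ℚ_p, S = {x ∈ ℚ_p⁵ : 2x₁x₅ + 2x₂x₄ + x₃² = 4θ}, and for r ∈ ℕ let O_r = {x ∈ S : max_{1≤i≤5} ‖x_i‖ = p^r} (S is the disjoint union of the O_r). Let μ be a Borel measure on ℚ_p⁵ such that μ(ℚ_p⁵ \ S) = 0, μ(O_r) < ∞ for every r ∈ ℕ, 0 < μ(O₀), and μ is G-invariant, meaning that for every g ∈ G the pushforward of μ under v ↦ g·v equals μ. Then for every r ≥ 1: μ(O_r) = p^{3r}·(1 + p^{−2})·μ(O₀). -/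

import Mathlib

/-!
The measure of `O_r` is computed by transporting pieces of it with explicit elements of `G`, without
any appeal to uniqueness of invariant measures.

For `x ∈ O_r` the conditions `‖x_i‖ = p^r` and `‖x_i‖ < p^r` only depend on `y = p^r x` modulo `p`.
The vector `y` is a nonzero isotropic vector over `𝔽_p` if `r ≥ 1`, and a point of the quadric
`{Q = 4θ}` over `𝔽_p` if `r = 0`.

* For `r ≥ 1` let `c_r` be the measure of the set where `y` is a multiple of the last basis vector.
  Cutting `O_r` according to the first nonzero entry among `y₁, y₂, y₄, y₅` gives four cells
  (`Orb_eq`), which by fibring over one coordinate at a time with unipotent elements of `K` (`fibre`)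
  and permuting coordinates have measures `p³ c_r`, `p² c_r`, `p c_r`, `c_r`. Hence
  `μ(O_r) = (1 + p)(1 + p²) c_r` (`measure_Orb`).
* For `r = 0`, `y₁` and `y₂` cannot both vanish, because `4θ` is not a square modulo `p` (Hensel).
  If `m` is the measure of `{y₁ = 0}`, the same fibring gives `p m` for `{y₁ ≠ 0}`, so
  `μ(O₀) = (p + 1) m` (`measure_Orb_zero`).
* The dilation `dilM` maps `{y₁ ≠ 0}` in `O_r` onto the smallest cell of `O_{r+1}` (`cell_dil`), so
  that `c₁ = p m` and `c_{r+1} = p³ c_r` (`measure_small_cell`).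

The coordinates `x₁, …, x₅` are written `x 0, …, x 4` in the code.
-/

open Matrix MeasureTheory
open scoped ENNReal

noncomputable section

variable (p : ℕ) [Fact p.Prime]

instance : MeasurableSpace ℚ_[p] := borel _
instance : BorelSpace ℚ_[p] := ⟨rfl⟩

/-- The 5×5 matrix `J` over `ℚ_p`. -/
def J5 : Matrix (Fin 5) (Fin 5) ℚ_[p] :=
  Matrix.of fun i j => if (i : ℕ) + (j : ℕ) = 4 then 1 else 0

/-- The group `G = SO(3,2;ℚ_p)`. -/
def SO32 : Set (Matrix (Fin 5) (Fin 5) ℚ_[p]) :=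
  {g | gᵀ * J5 p * g = J5 p ∧ g.det = 1}

/-- The sphere `S = {x : 2x₁x₅ + 2x₂x₄ + x₃² = 4θ}` (non-split case). -/
def Ssph (θ : ℚ_[p]) : Set (Fin 5 → ℚ_[p]) :=
  {x | 2 * x 0 * x 4 + 2 * x 1 * x 3 + (x 2) ^ 2 = 4 * θ}

/-- The `K`-orbit `O_r = {x ∈ S : max ‖x_i‖ = p^r}`. -/
def Orb (θ : ℚ_[p]) (r : ℕ) : Set (Fin 5 → ℚ_[p]) :=
  {x ∈ Ssph p θ | (∀ i, ‖x i‖ ≤ (p : ℝ) ^ r) ∧ ∃ i, ‖x i‖ = (p : ℝ) ^ r}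

namespace Stmt9

variable {p}

/-! ### p-adic norms, residues and squares -/

section Norms

lemma norm_two (hp : p ≠ 2) : ‖(2 : ℚ_[p])‖ = 1 := by
  have h := Padic.norm_natCast_eq_one_iff (p := p) (n := 2)
  have h2 : p.Coprime 2 := by
    rw [Nat.coprime_primes Fact.out Nat.prime_two]; exact hp
  exact_mod_cast h.2 h2

lemma add_le {x y : ℚ_[p]} {R : ℝ} (hx : ‖x‖ ≤ R) (hy : ‖y‖ ≤ R) : ‖x + y‖ ≤ R :=
  (Padic.nonarchimedean x y).trans (max_le hx hy)

lemma add_lt {x y : ℚ_[p]} {R : ℝ} (hx : ‖x‖ < R) (hy : ‖y‖ < R) : ‖x + y‖ < R :=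
  (Padic.nonarchimedean x y).trans_lt (max_lt hx hy)

lemma int_mul_le (a : ℤ) {x : ℚ_[p]} {R : ℝ} (hx : ‖x‖ ≤ R) : ‖(a : ℚ_[p]) * x‖ ≤ R := by
  rw [norm_mul]
  exact (mul_le_of_le_one_left (norm_nonneg _) (Padic.norm_int_le_one a)).trans hx

lemma int_mul_lt (a : ℤ) {x : ℚ_[p]} {R : ℝ} (hx : ‖x‖ < R) : ‖(a : ℚ_[p]) * x‖ < R := by
  rw [norm_mul]
  exact (mul_le_of_le_one_left (norm_nonneg _) (Padic.norm_int_le_one a)).trans_lt hx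

lemma add_eq {x y : ℚ_[p]} {R : ℝ} (hx : ‖x‖ = R) (hy : ‖y‖ < R) : ‖x + y‖ = R := by
  rw [Padic.add_eq_max_of_ne (by rw [hx]; exact hy.ne'), hx, max_eq_left hy.le]

/-- Values of the norm are integral powers of `p`. -/
lemma lt_pow_succ {x : ℚ_[p]} {r : ℕ} : ‖x‖ < (p : ℝ) ^ (r + 1) ↔ ‖x‖ ≤ (p : ℝ) ^ r := by
  have := Padic.norm_le_pow_iff_norm_lt_pow_add_one x (r : ℤ)
  exact_mod_cast this.symm

lemma one_lt_p : (1 : ℝ) < p := by exact_mod_cast (Fact.out : p.Prime).one_lt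

lemma pow_pos' (r : ℕ) : (0 : ℝ) < (p : ℝ) ^ r := pow_pos (zero_lt_one.trans one_lt_p) r

/-- Each `p`-adic integer has a unique residue among `0, …, p - 1`. -/
lemma existsUnique_residue (t : ℚ_[p]) (ht : ‖t‖ ≤ 1) :
    ∃! a : ℕ, a < p ∧ ‖t - (a : ℚ_[p])‖ < 1 := by
  obtain ⟨T, rfl⟩ : ∃ T : ℤ_[p], (T : ℚ_[p]) = t := ⟨⟨t, ht⟩, rfl⟩
  have key : ∀ a : ℕ, (T - (a : ℤ_[p]) ∈ IsLocalRing.maximalIdeal ℤ_[p] ↔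
      ‖(T : ℚ_[p]) - (a : ℚ_[p])‖ < 1) := by
    intro a
    rw [IsLocalRing.mem_maximalIdeal, PadicInt.mem_nonunits, PadicInt.norm_def]
    simp
  obtain ⟨n, hn, h⟩ := PadicInt.exists_mem_range T
  refine ⟨n, ⟨hn, (key n).1 h⟩, ?_⟩
  rintro m ⟨hm, h'⟩
  have := PadicInt.zmod_congr_of_sub_mem_max_ideal T m n ((key m).2 h') h
  rw [ZMod.natCast_eq_natCast_iff', Nat.mod_eq_of_lt hm, Nat.mod_eq_of_lt hn] at this
  exact this

/-- If `c` is a unit and `‖x‖ ≤ ‖y‖ = R`, exactly one of the translates `x + c a y`, `0 ≤ a < p`,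
has norm less than `R`. -/
lemma existsUnique_shift {c x y : ℚ_[p]} {R : ℝ} (hR : 0 < R) (hc : ‖c‖ = 1) (hx : ‖x‖ ≤ R)
    (hy : ‖y‖ = R) : ∃! a : ℕ, a < p ∧ ‖x + c * a * y‖ < R := by
  have hcn : c ≠ 0 := by rintro rfl; simp at hc
  have hyn : y ≠ 0 := by rintro rfl; simp at hy; exact hR.ne hy
  have hcy : ‖-(c * y)‖ = R := by rw [norm_neg, norm_mul, hc, hy, one_mul]
  have := existsUnique_residue (-(x / (c * y))) (by
    rw [norm_neg, norm_div, norm_mul, hc, hy, one_mul]; exact div_le_one_of_le₀ hx hR.le)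
  convert this using 3 with a
  have e : x + c * a * y = (-(x / (c * y)) - a) * (-(c * y)) := by field_simp; ring
  rw [e, norm_mul, hcy]
  exact mul_lt_iff_lt_one_left hR

/-- Hensel: for `p` odd, if `4θ` is a unit congruent to a square modulo `p`, then it is a square,
and so is `θ`. -/
lemma isSquare_of_near (hp : p ≠ 2) {θ y : ℚ_[p]} (hθ : ‖θ‖ = 1) (h : ‖y ^ 2 - 4 * θ‖ < 1) :
    ∃ s : ℚ_[p], s ^ 2 = θ := by
  have h2 := norm_two hp
  have h4 : ‖(4 : ℚ_[p]) * θ‖ = 1 := by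
    rw [show (4 : ℚ_[p]) = 2 * 2 by norm_num, norm_mul, norm_mul, h2, hθ]; norm_num
  have hy : ‖y‖ = 1 := by
    have : ‖y ^ 2‖ = 1 := by
      have := add_eq h4 h
      rwa [add_sub_cancel] at this
    rw [norm_pow] at this
    exact (pow_eq_one_iff_of_nonneg (norm_nonneg _) two_ne_zero).1 this
  obtain ⟨Y, rfl⟩ : ∃ Y : ℤ_[p], (Y : ℚ_[p]) = y := ⟨⟨y, hy.le⟩, rfl⟩
  obtain ⟨Θ, hΘ⟩ : ∃ Θ : ℤ_[p], (Θ : ℚ_[p]) = 4 * θ := ⟨⟨4 * θ, h4.le⟩, rfl⟩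
  let F : Polynomial ℤ_[p] := Polynomial.X ^ 2 - Polynomial.C Θ
  have hd : ‖F.derivative.aeval Y‖ = 1 := by
    have : F.derivative.aeval Y = 2 * Y := by
      simp only [F, Polynomial.derivative_X_pow,
        Polynomial.derivative_C, map_sub, map_mul, map_pow, Polynomial.aeval_X, map_zero]
      norm_num
    rw [this, PadicInt.norm_def]
    rw [PadicInt.coe_mul, norm_mul, hy, mul_one]
    exact h2
  have hF : ‖F.aeval Y‖ < ‖F.derivative.aeval Y‖ ^ 2 := by
    have : F.aeval Y = Y ^ 2 - Θ := by simp [F]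
    rw [hd, this, PadicInt.norm_def]
    simpa [hΘ] using h
  obtain ⟨z, hz, -⟩ := hensels_lemma hF
  have hz' : z ^ 2 = Θ := by
    have : F.aeval z = z ^ 2 - Θ := by simp [F]
    rw [this] at hz
    exact sub_eq_zero.1 hz
  have hz'' : (z : ℚ_[p]) ^ 2 = 4 * θ := by
    have := congrArg (fun t : ℤ_[p] => (t : ℚ_[p])) hz'
    simpa [hΘ] using this
  have h20 : (2 : ℚ_[p]) ≠ 0 := two_ne_zero
  exact ⟨(z : ℚ_[p]) / 2, by rw [div_pow, hz'']; field_simp; ring⟩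

end Norms

/-! ### Elements of `G` -/

section Matrices

/-- The Weyl element `(x₁, x₂, x₃, x₄, x₅) ↦ (x₂, x₁, x₃, x₅, x₄)` of `K`. -/
def swapM : Matrix (Fin 5) (Fin 5) ℚ_[p] :=
  !![0,1,0,0,0; 1,0,0,0,0; 0,0,1,0,0; 0,0,0,0,1; 0,0,0,1,0]

/-- The Weyl element `(x₁, x₂, x₃, x₄, x₅) ↦ (x₁, x₄, -x₃, x₂, x₅)` of `K`; the sign makes the
determinant `1`. -/
def reflM : Matrix (Fin 5) (Fin 5) ℚ_[p] :=
  !![1,0,0,0,0; 0,0,0,1,0; 0,0,-1,0,0; 0,1,0,0,0; 0,0,0,0,1]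

/-- The element `(x₁, x₂, x₃, x₄, x₅) ↦ (p x₅, x₂, -x₃, x₄, p⁻¹ x₁)` of `G`: the torus element
`diag(p, 1, 1, 1, p⁻¹)` times the Weyl element exchanging `x₁` and `x₅`. -/
def dilM : Matrix (Fin 5) (Fin 5) ℚ_[p] :=
  !![0,0,0,0,(p : ℚ_[p]); 0,1,0,0,0; 0,0,-1,0,0; 0,0,0,1,0; (p : ℚ_[p])⁻¹,0,0,0,0]

/-- The unipotent elements of `K` attached to a long root: `x₁ ↦ x₁ + a x₂`, `x₄ ↦ x₄ - a x₅`. -/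
def longM (a : ℤ) : Matrix (Fin 5) (Fin 5) ℚ_[p] :=
  !![1,(a : ℚ_[p]),0,0,0; 0,1,0,0,0; 0,0,1,0,0; 0,0,0,1,-(a : ℚ_[p]); 0,0,0,0,1]

/-- The unipotent elements of `K` attached to a short root: `x₃ ↦ x₃ + 2a x₄`,
`x₂ ↦ x₂ - 2a x₃ - 2a² x₄`. The parameter is `2a` so that the entries are integers. -/
def shortM (a : ℤ) : Matrix (Fin 5) (Fin 5) ℚ_[p] :=
  !![1,0,0,0,0; 0,1,-(2 * a : ℚ_[p]),-(2 * a ^ 2 : ℚ_[p]),0; 0,0,1,(2 * a : ℚ_[p]),0;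
    0,0,0,1,0; 0,0,0,0,1]

lemma J5_eq : J5 p = !![0,0,0,0,1; 0,0,0,1,0; 0,0,1,0,0; 0,1,0,0,0; 1,0,0,0,0] := by
  ext i j; fin_cases i <;> fin_cases j <;> simp [J5]

lemma p_ne : (p : ℚ_[p]) ≠ 0 := by exact_mod_cast (Fact.out : p.Prime).ne_zero

lemma swapM_mem : swapM ∈ SO32 p := by
  constructor
  · rw [J5_eq]; ext i j; fin_cases i <;> fin_cases j <;>
      simp [swapM, Matrix.mul_apply, Fin.sum_univ_succ]
  · simp [swapM, Matrix.det_succ_row_zero, Fin.sum_univ_succ, Fin.succAbove]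

lemma reflM_mem : reflM ∈ SO32 p := by
  constructor
  · rw [J5_eq]; ext i j; fin_cases i <;> fin_cases j <;>
      simp [reflM, Matrix.mul_apply, Fin.sum_univ_succ]
  · simp [reflM, Matrix.det_succ_row_zero, Fin.sum_univ_succ, Fin.succAbove]

lemma dilM_mem : dilM ∈ SO32 p := by
  have := p_ne (p := p)
  constructor
  · rw [J5_eq]; ext i j; fin_cases i <;> fin_cases j <;>
      simp [dilM, Matrix.mul_apply, Fin.sum_univ_succ, this]
  · simp [dilM, Matrix.det_succ_row_zero, Fin.sum_univ_succ, Fin.succAbove, this]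
    norm_num

lemma longM_mem (a : ℤ) : longM a ∈ SO32 p := by
  constructor
  · rw [J5_eq]; ext i j; fin_cases i <;> fin_cases j <;>
      simp [longM, Matrix.mul_apply, Fin.sum_univ_succ]
  · simp [longM, Matrix.det_succ_row_zero, Fin.sum_univ_succ, Fin.succAbove]

lemma shortM_mem (a : ℤ) : shortM a ∈ SO32 p := by
  constructor
  · rw [J5_eq]; ext i j; fin_cases i <;> fin_cases j <;>
      simp [shortM, Matrix.mul_apply, Fin.sum_univ_succ]; ring
  · simp [shortM, Matrix.det_succ_row_zero, Fin.sum_univ_succ, Fin.succAbove]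

lemma swapM_apply (x : Fin 5 → ℚ_[p]) : swapM *ᵥ x = ![x 1, x 0, x 2, x 4, x 3] := by
  ext i; fin_cases i <;> simp [swapM, Matrix.mulVec, dotProduct, Fin.sum_univ_succ]

lemma reflM_apply (x : Fin 5 → ℚ_[p]) : reflM *ᵥ x = ![x 0, x 3, -x 2, x 1, x 4] := by
  ext i; fin_cases i <;> simp [reflM, Matrix.mulVec, dotProduct, Fin.sum_univ_succ]

lemma dilM_apply (x : Fin 5 → ℚ_[p]) :
    dilM *ᵥ x = ![p * x 4, x 1, -x 2, x 3, (p : ℚ_[p])⁻¹ * x 0] := by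
  ext i; fin_cases i <;> simp [dilM, Matrix.mulVec, dotProduct, Fin.sum_univ_succ]

lemma longM_apply (a : ℤ) (x : Fin 5 → ℚ_[p]) :
    longM a *ᵥ x = ![x 0 + a * x 1, x 1, x 2, x 3 + (-a : ℤ) * x 4, x 4] := by
  ext i; fin_cases i <;> simp [longM, Matrix.mulVec, dotProduct, Fin.sum_univ_succ]

lemma shortM_apply (a : ℤ) (x : Fin 5 → ℚ_[p]) :
    shortM a *ᵥ x = ![x 0, x 1 + ((-2 * a : ℤ) * x 2 + (-2 * a ^ 2 : ℤ) * x 3),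
      x 2 + (2 * a : ℤ) * x 3, x 3, x 4] := by
  ext i; fin_cases i <;> simp [shortM, Matrix.mulVec, dotProduct, Fin.sum_univ_succ]

end Matrices
/-! ### Cells and the relations between their measures -/

section Cells

/-- The cell of `S ∩ {max ‖x_i‖ ≤ p^r}` on which `‖x_j‖ = p^r` and `‖x_i‖ < p^r` for `i ∈ L`. -/
def cell (θ : ℚ_[p]) (r : ℕ) (L : Finset (Fin 5)) (j : Fin 5) : Set (Fin 5 → ℚ_[p]) :=
  {x | x ∈ Ssph p θ ∧ (∀ i, ‖x i‖ ≤ (p : ℝ) ^ r) ∧ (∀ i ∈ L, ‖x i‖ < (p : ℝ) ^ r) ∧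
    ‖x j‖ = (p : ℝ) ^ r}

lemma forall_fin5 {P : Fin 5 → Prop} : (∀ i, P i) ↔ P 0 ∧ P 1 ∧ P 2 ∧ P 3 ∧ P 4 :=
  ⟨fun h => ⟨h 0, h 1, h 2, h 3, h 4⟩,
    fun ⟨h0, h1, h2, h3, h4⟩ i => by fin_cases i <;> assumption⟩

lemma Ssph_eq {θ : ℚ_[p]} {x : Fin 5 → ℚ_[p]} (hx : x ∈ Ssph p θ) :
    2 * x 0 * x 4 + 2 * x 1 * x 3 + x 2 ^ 2 = 4 * θ := hx

lemma measurableSet_Ssph (θ : ℚ_[p]) : MeasurableSet (Ssph p θ) := by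
  refine IsClosed.measurableSet (isClosed_eq ?_ continuous_const)
  fun_prop

lemma measurableSet_cell (θ : ℚ_[p]) (r : ℕ) (L : Finset (Fin 5)) (j : Fin 5) :
    MeasurableSet (cell θ r L j) := by
  have hn : ∀ i : Fin 5, Measurable fun x : Fin 5 → ℚ_[p] => ‖x i‖ := fun i =>
    (continuous_apply i).norm.measurable
  have hle : MeasurableSet (⋂ i, {x : Fin 5 → ℚ_[p] | ‖x i‖ ≤ (p : ℝ) ^ r}) :=
    MeasurableSet.iInter fun i => measurableSet_le (hn i) measurable_const
  have hlt : MeasurableSet (⋂ i ∈ L, {x : Fin 5 → ℚ_[p] | ‖x i‖ < (p : ℝ) ^ r}) :=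
    Finset.measurableSet_biInter L fun i _ => measurableSet_lt (hn i) measurable_const
  have heq : MeasurableSet {x : Fin 5 → ℚ_[p] | ‖x j‖ = (p : ℝ) ^ r} :=
    measurableSet_eq_fun (hn j) measurable_const
  convert (measurableSet_Ssph θ).inter (hle.inter (hlt.inter heq)) using 1
  ext x
  simp only [cell, Set.mem_ofPred_eq, Set.mem_inter_iff, Set.mem_iInter]

lemma cell_insert (θ : ℚ_[p]) (r : ℕ) (L : Finset (Fin 5)) (i j : Fin 5) :
    {x ∈ cell θ r L j | ‖x i‖ < (p : ℝ) ^ r} = cell θ r (insert i L) j := by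
  ext x
  simp only [cell, Set.mem_ofPred_eq, Finset.forall_mem_insert]
  tauto

lemma cell_insert_disjoint (θ : ℚ_[p]) (r : ℕ) {L L' : Finset (Fin 5)} {j j' : Fin 5}
    (h : j ∈ L') : Disjoint (cell θ r L j) (cell θ r L' j') := by
  rw [Set.disjoint_left]
  rintro x ⟨-, -, -, h1⟩ ⟨-, -, h2, -⟩
  exact (h2 j h).ne h1

variable {μ : Measure (Fin 5 → ℚ_[p])}
  (hinv : ∀ g ∈ SO32 p, Measure.map (fun v : Fin 5 → ℚ_[p] => g.mulVec v) μ = μ)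
include hinv

lemma measure_preimage {M : Matrix (Fin 5) (Fin 5) ℚ_[p]} (hM : M ∈ SO32 p)
    {E : Set (Fin 5 → ℚ_[p])} (hE : MeasurableSet E) : μ {x | M *ᵥ x ∈ E} = μ E := by
  have hc : Continuous fun v : Fin 5 → ℚ_[p] => M *ᵥ v := by fun_prop
  conv_rhs => rw [← hinv M hM, Measure.map_apply hc.measurable hE]
  rfl

/-- If a family of elements of `G` indexed by `ℤ` preserves `F` and translates the coordinate
`x_i` by `c a x_j`, where `c` is a unit and `‖x_j‖ = R ≥ ‖x_i‖` on `F`, then `F` is the disjoint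
union of the `p` translates of `F ∩ {‖x_i‖ < R}` for `0 ≤ a < p`. -/
lemma fibre (M : ℤ → Matrix (Fin 5) (Fin 5) ℚ_[p]) (hM : ∀ a, M a ∈ SO32 p) {c : ℚ_[p]}
    (hc : ‖c‖ = 1) {F : Set (Fin 5 → ℚ_[p])} (hF : MeasurableSet F) {R : ℝ} (hR : 0 < R)
    (i j : Fin 5) (hFi : ∀ x ∈ F, ‖x i‖ ≤ R) (hFj : ∀ x ∈ F, ‖x j‖ = R)
    (hMF : ∀ a, ∀ x ∈ F, M a *ᵥ x ∈ F) (hneg : ∀ a x, M (-a) *ᵥ (M a *ᵥ x) = x)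
    (hi : ∀ a x, (M a *ᵥ x) i = x i + c * a * x j) :
    μ F = p * μ {x ∈ F | ‖x i‖ < R} := by
  set E : Set (Fin 5 → ℚ_[p]) := {x ∈ F | ‖x i‖ < R} with hE
  have hEm : MeasurableSet E := hF.inter
    (measurableSet_lt (continuous_apply i).norm.measurable measurable_const)
  have hMF' : ∀ a x, M a *ᵥ x ∈ F ↔ x ∈ F := fun a x =>
    ⟨fun h => by simpa [hneg] using hMF (-a) _ h, hMF a x⟩
  have hmem : ∀ (a : ℕ) x, M a *ᵥ x ∈ E ↔ x ∈ F ∧ ‖x i + c * a * x j‖ < R := by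
    intro a x
    simp [hE, hMF', hi]
  have hU : F = ⋃ a ∈ Finset.range p, {x | M (a : ℕ) *ᵥ x ∈ E} := by
    ext x
    simp only [Set.mem_iUnion, Finset.mem_range, exists_prop, Set.mem_ofPred_eq, hmem]
    constructor
    · intro hx
      obtain ⟨a, ⟨ha, h⟩, -⟩ := existsUnique_shift hR hc (hFi x hx) (hFj x hx)
      exact ⟨a, ha, hx, h⟩
    · rintro ⟨a, -, hx, -⟩
      exact hx
  have hcont : ∀ a, Continuous fun v : Fin 5 → ℚ_[p] => M a *ᵥ v := fun a => by fun_prop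
  rw [hU, measure_biUnion_finset]
  · rw [Finset.sum_congr rfl fun (a : ℕ) _ => measure_preimage hinv (hM a) hEm]
    simp
  · intro a ha b hb hab
    refine Set.disjoint_left.2 fun x hxa hxb => hab ?_
    have h1 := (hmem a x).1 hxa
    have h2 := (hmem b x).1 hxb
    exact (existsUnique_shift hR hc (hFi x h1.1) (hFj x h1.1)).unique
      ⟨by simpa using ha, h1.2⟩ ⟨by simpa using hb, h2.2⟩
  · exact fun a _ => (hcont a).measurable hEm

omit hinv

lemma longM_neg (a : ℤ) (x : Fin 5 → ℚ_[p]) : longM (-a) *ᵥ (longM a *ᵥ x) = x := by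
  ext i; fin_cases i <;> simp [longM_apply]

lemma shortM_neg (a : ℤ) (x : Fin 5 → ℚ_[p]) : shortM (-a) *ᵥ (shortM a *ᵥ x) = x := by
  ext i; fin_cases i <;> simp [shortM_apply]
  ring

lemma longM_Ssph {θ : ℚ_[p]} (a : ℤ) {x : Fin 5 → ℚ_[p]} (hx : x ∈ Ssph p θ) :
    longM a *ᵥ x ∈ Ssph p θ := by
  simp only [Ssph, Set.mem_ofPred_eq] at hx ⊢
  simp [longM_apply]
  linear_combination hx

lemma shortM_Ssph {θ : ℚ_[p]} (a : ℤ) {x : Fin 5 → ℚ_[p]} (hx : x ∈ Ssph p θ) :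
    shortM a *ᵥ x ∈ Ssph p θ := by
  simp only [Ssph, Set.mem_ofPred_eq] at hx ⊢
  simp [shortM_apply]
  linear_combination hx

include hinv

/-- Fibre over the residue of `x₁ / x₂`, moved by `x₁ ↦ x₁ + a x₂`. -/
lemma cell_one (θ : ℚ_[p]) (r : ℕ) : μ (cell θ r ∅ 1) = p * μ (cell θ r {0} 1) := by
  rw [fibre hinv longM longM_mem (c := 1) (by simp) (measurableSet_cell θ r ∅ 1) (pow_pos' r) 0 1
    (fun x hx => hx.2.1 0) (fun x hx => hx.2.2.2) ?_ longM_neg (fun a x => by simp [longM_apply]),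
    cell_insert]
  · rfl
  rintro a x ⟨hS, hle, -, h1⟩
  refine ⟨longM_Ssph a hS, ?_, by simp, by simpa [longM_apply] using h1⟩
  rw [longM_apply, forall_fin5]
  exact ⟨add_le (hle 0) (int_mul_le _ (hle 1)), hle 1, hle 2,
    add_le (hle 3) (int_mul_le _ (hle 4)), hle 4⟩

/-- Fibre over the residue of `x₄ / x₅`, moved by `x₄ ↦ x₄ - a x₅`; the accompanying change
`x₁ ↦ x₁ + a x₂` is harmless because `x₁` and `x₂` are both small. -/
lemma cell_four (θ : ℚ_[p]) (r : ℕ) :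
    μ (cell θ r {0, 1} 4) = p * μ (cell θ r {3, 0, 1} 4) := by
  rw [fibre hinv longM longM_mem (c := -1) (by simp) (measurableSet_cell θ r {0, 1} 4) (pow_pos' r)
    3 4 (fun x hx => hx.2.1 3) (fun x hx => hx.2.2.2) ?_ longM_neg
    (fun a x => by simp [longM_apply]), cell_insert]
  rintro a x ⟨hS, hle, hlt, h1⟩
  have hlt0 := hlt 0 (by simp)
  have hlt1 := hlt 1 (by simp)
  refine ⟨longM_Ssph a hS, ?_, ?_, by simpa [longM_apply] using h1⟩
  · rw [longM_apply, forall_fin5]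
    exact ⟨add_le (hle 0) (int_mul_le _ (hle 1)), hle 1, hle 2,
      add_le (hle 3) (int_mul_le _ (hle 4)), hle 4⟩
  · rw [longM_apply]
    simp only [Finset.forall_mem_insert, Finset.mem_singleton, forall_eq]
    exact ⟨add_lt hlt0 (int_mul_lt _ hlt1), hlt1⟩

/-- Fibre over the residue of `x₃ / x₄`, moved by `x₃ ↦ x₃ + 2a x₄`. -/
lemma cell_three (hp : p ≠ 2) (θ : ℚ_[p]) (r : ℕ) :
    μ (cell θ r {0} 3) = p * μ (cell θ r {2, 0} 3) := by
  rw [fibre hinv shortM shortM_mem (c := 2) (norm_two hp) (measurableSet_cell θ r {0} 3)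
    (pow_pos' r) 2 3 (fun x hx => hx.2.1 2) (fun x hx => hx.2.2.2) ?_ shortM_neg
    (fun a x => by simp [shortM_apply]), cell_insert]
  rintro a x ⟨hS, hle, hlt, h1⟩
  refine ⟨shortM_Ssph a hS, ?_, by simpa [shortM_apply] using hlt, by simpa [shortM_apply] using h1⟩
  rw [shortM_apply, forall_fin5]
  exact ⟨hle 0, add_le (hle 1) (add_le (int_mul_le _ (hle 2)) (int_mul_le _ (hle 3))),
    add_le (hle 2) (int_mul_le _ (hle 3)), hle 3, hle 4⟩

lemma cell_swap_zero (θ : ℚ_[p]) (r : ℕ) : μ (cell θ r ∅ 0) = μ (cell θ r ∅ 1) := by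
  rw [← measure_preimage hinv swapM_mem (measurableSet_cell θ r ∅ 1)]
  congr 1
  ext x
  simp only [cell, Ssph, Set.mem_ofPred_eq, swapM_apply, forall_fin5]
  simp
  have : 2 * x 1 * x 3 + 2 * x 0 * x 4 = 2 * x 0 * x 4 + 2 * x 1 * x 3 := by ring
  rw [this]
  tauto

lemma cell_swap_three (θ : ℚ_[p]) (r : ℕ) :
    μ (cell θ r {0, 1} 3) = μ (cell θ r {0, 1} 4) := by
  rw [← measure_preimage hinv swapM_mem (measurableSet_cell θ r {0, 1} 4)]
  congr 1
  ext x
  simp only [cell, Ssph, Set.mem_ofPred_eq, swapM_apply, forall_fin5]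
  simp
  have : 2 * x 1 * x 3 + 2 * x 0 * x 4 = 2 * x 0 * x 4 + 2 * x 1 * x 3 := by ring
  rw [this]
  tauto

lemma cell_refl (θ : ℚ_[p]) (r : ℕ) : μ (cell θ r {0} 1) = μ (cell θ r {0} 3) := by
  rw [← measure_preimage hinv reflM_mem (measurableSet_cell θ r {0} 3)]
  congr 1
  ext x
  simp only [cell, Ssph, Set.mem_ofPred_eq, reflM_apply, forall_fin5]
  simp
  have : 2 * x 3 * x 1 = 2 * x 1 * x 3 := by ring
  rw [this]
  tauto

end Cells

/-! ### Decomposition of `O_r` into cells -/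

section Equation

variable {θ : ℚ_[p]} {r : ℕ} {x : Fin 5 → ℚ_[p]}

lemma norm_four_mul (hp : p ≠ 2) (hθ : ‖θ‖ = 1) : ‖4 * θ‖ = 1 := by
  rw [show (4 : ℚ_[p]) = 2 * 2 by norm_num, norm_mul, norm_mul, norm_two hp, hθ]; norm_num

lemma norm_two_mul (hp : p ≠ 2) (a b : ℚ_[p]) : ‖2 * a * b‖ = ‖a‖ * ‖b‖ := by
  rw [norm_mul, norm_mul, norm_two hp, one_mul]

lemma mul_lt_left {a b R : ℝ} (ha0 : 0 ≤ a) (ha : a < R) (hb : b ≤ R) : a * b < R * R :=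
  (mul_le_mul_of_nonneg_left hb ha0).trans_lt (by
    exact mul_lt_mul_of_pos_right ha (ha0.trans_lt ha))

lemma one_lt_sq (hr : 1 ≤ r) : (1 : ℝ) < (p : ℝ) ^ r * (p : ℝ) ^ r := by
  have := one_lt_pow₀ (one_lt_p (p := p)) (by omega : r ≠ 0)
  nlinarith

/-- Modulo `p`, the vector `p^r x` is isotropic, so `x₃` is small as soon as both products are. -/
lemma lt_two (hp : p ≠ 2) (hθ : ‖θ‖ = 1) (hr : 1 ≤ r) (hx : x ∈ Ssph p θ)
    (h04 : ‖x 0‖ * ‖x 4‖ < (p : ℝ) ^ r * (p : ℝ) ^ r)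
    (h13 : ‖x 1‖ * ‖x 3‖ < (p : ℝ) ^ r * (p : ℝ) ^ r) : ‖x 2‖ < (p : ℝ) ^ r := by
  have e : x 2 ^ 2 = 4 * θ + (-(2 * x 0 * x 4) + -(2 * x 1 * x 3)) := by
    linear_combination Ssph_eq hx
  have : ‖x 2 ^ 2‖ < (p : ℝ) ^ r * (p : ℝ) ^ r := by
    rw [e]
    refine add_lt ((norm_four_mul hp hθ).trans_lt (one_lt_sq hr)) (add_lt ?_ ?_) <;>
      rwa [norm_neg, norm_two_mul hp]
  rw [norm_pow, sq] at this
  exact lt_of_mul_self_lt_mul_self₀ (pow_pos' r).le this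

/-- Modulo `p`, if `x₁ = x₃ = 0` and `x₄ ≠ 0` then the isotropy equation forces `x₂ = 0`. -/
lemma lt_one_of_three (hp : p ≠ 2) (hθ : ‖θ‖ = 1) (hr : 1 ≤ r) (hx : x ∈ Ssph p θ)
    (hle : ∀ i, ‖x i‖ ≤ (p : ℝ) ^ r)
    (h0 : ‖x 0‖ < (p : ℝ) ^ r) (h2 : ‖x 2‖ < (p : ℝ) ^ r) (h3 : ‖x 3‖ = (p : ℝ) ^ r) :
    ‖x 1‖ < (p : ℝ) ^ r := by
  have e : 2 * x 1 * x 3 = 4 * θ + (-(2 * x 0 * x 4) + -(x 2 ^ 2)) := by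
    linear_combination Ssph_eq hx
  have : ‖2 * x 1 * x 3‖ < (p : ℝ) ^ r * (p : ℝ) ^ r := by
    rw [e]
    refine add_lt ((norm_four_mul hp hθ).trans_lt (one_lt_sq hr)) (add_lt ?_ ?_)
    · rw [norm_neg, norm_two_mul hp]
      exact mul_lt_left (norm_nonneg _) h0 (hle 4)
    · rw [norm_neg, norm_pow, sq]
      exact mul_lt_left (norm_nonneg _) h2 h2.le
  rw [norm_two_mul hp, h3] at this
  exact lt_of_mul_lt_mul_right this (pow_pos' r).le

lemma cell_two_zero (hp : p ≠ 2) (hθ : ‖θ‖ = 1) (hr : 1 ≤ r) :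
    cell θ r {2, 0} 3 = cell θ r {0, 1} 3 := by
  ext x
  simp only [cell, Set.mem_ofPred_eq, Finset.forall_mem_insert, Finset.mem_singleton, forall_eq]
  constructor
  · rintro ⟨hx, hle, ⟨h2, h0⟩, h3⟩
    exact ⟨hx, hle, ⟨h0, lt_one_of_three hp hθ hr hx hle h0 h2 h3⟩, h3⟩
  · rintro ⟨hx, hle, ⟨h0, h1⟩, h3⟩
    exact ⟨hx, hle, ⟨lt_two hp hθ hr hx (mul_lt_left (norm_nonneg _) h0 (hle 4))
      (mul_lt_left (norm_nonneg _) h1 (hle 3)), h0⟩, h3⟩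

/-- The cells of `O_r`, `r ≥ 1`, according to the first coordinate of maximal norm among
`x₁, x₂, x₄, x₅`: the Bruhat cells of the quadric of isotropic lines modulo `p`. -/
lemma Orb_eq (hp : p ≠ 2) (hθ : ‖θ‖ = 1) (hr : 1 ≤ r) :
    Orb p θ r = cell θ r ∅ 0 ∪ (cell θ r {0} 1 ∪ (cell θ r {0, 1} 3 ∪ cell θ r {3, 0, 1} 4)) := by
  ext x
  simp only [cell, Orb, Set.mem_ofPred_eq, Finset.forall_mem_insert, Finset.mem_singleton, forall_eq,
    Set.mem_union]
  constructor
  · rintro ⟨hx, hle, i, hi⟩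
    rcases (hle 0).eq_or_lt with h0 | h0
    · simp [hx, hle, h0]
    rcases (hle 1).eq_or_lt with h1 | h1
    · simp [hx, hle, h0, h1]
    rcases (hle 3).eq_or_lt with h3 | h3
    · simp [hx, hle, h0, h1, h3]
    have h2 := lt_two hp hθ hr hx (mul_lt_left (norm_nonneg _) h0 (hle 4))
      (mul_lt_left (norm_nonneg _) h1 (hle 3))
    have h4 : ‖x 4‖ = (p : ℝ) ^ r := by
      fin_cases i
      · exact absurd hi h0.ne
      · exact absurd hi h1.ne
      · exact absurd hi h2.ne
      · exact absurd hi h3.ne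
      · exact hi
    simp [hx, hle, h0, h1, h3, h4]
  · rintro (h | h | h | h) <;> exact ⟨h.1, h.2.1, _, h.2.2.2⟩

/-- If `x₁` and `x₂` were both small in `O₀`, the equation would make `4θ` a square modulo `p`. -/
lemma Orb_zero_eq (hp : p ≠ 2) (hθ : ‖θ‖ = 1) (hns : ¬ ∃ s : ℚ_[p], s ^ 2 = θ) :
    Orb p θ 0 = cell θ 0 ∅ 0 ∪ cell θ 0 {0} 1 := by
  ext x
  simp only [cell, Orb, Set.mem_ofPred_eq, Finset.mem_singleton, forall_eq, Set.mem_union, pow_zero]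
  constructor
  · rintro ⟨hx, hle, -⟩
    rcases (hle 0).eq_or_lt with h0 | h0
    · simp [hx, hle, h0]
    rcases (hle 1).eq_or_lt with h1 | h1
    · simp [hx, hle, h0, h1]
    -- Both `x₁` and `x₂` small: then `x₃²` is congruent to `4θ`, which is impossible.
    refine absurd (isSquare_of_near hp hθ (y := x 2) ?_) hns
    have e : x 2 ^ 2 - 4 * θ = -(2 * x 0 * x 4) + -(2 * x 1 * x 3) := by
      linear_combination Ssph_eq hx
    rw [e]
    refine add_lt ?_ ?_ <;> rw [norm_neg, norm_two_mul hp]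
    · simpa using mul_lt_left (norm_nonneg _) h0 (hle 4)
    · simpa using mul_lt_left (norm_nonneg _) h1 (hle 3)
  · rintro (h | h) <;> exact ⟨h.1, h.2.1, _, h.2.2.2⟩

end Equation

/-! ### Measures of the orbits -/

section Step

variable {μ : Measure (Fin 5 → ℚ_[p])}
  (hinv : ∀ g ∈ SO32 p, Measure.map (fun v : Fin 5 → ℚ_[p] => g.mulVec v) μ = μ)
  {θ : ℚ_[p]}
include hinv

/-- The dilation `dilM` maps the open cell of `O_r` onto the smallest cell of `O_{r+1}`. -/
lemma cell_dil (hp : p ≠ 2) (hθ : ‖θ‖ = 1) (r : ℕ) :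
    μ (cell θ r ∅ 0) = μ (cell θ (r + 1) {3, 0, 1} 4) := by
  rw [← measure_preimage hinv dilM_mem (measurableSet_cell θ (r + 1) {3, 0, 1} 4)]
  congr 1
  ext x
  have hp0 := p_ne (p := p)
  have hR := pow_pos' (p := p) r
  have hp1 := one_lt_p (p := p)
  have hpp : (0 : ℝ) < p := zero_lt_one.trans hp1
  have hS : dilM *ᵥ x ∈ Ssph p θ ↔ x ∈ Ssph p θ := by
    simp only [Ssph, Set.mem_ofPred_eq, dilM_apply]
    have : 2 * (p * x 4) * ((p : ℚ_[p])⁻¹ * x 0) = 2 * x 0 * x 4 := by field_simp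
    simp [this]
  have n4 : ‖(p : ℚ_[p])⁻¹ * x 0‖ = p * ‖x 0‖ := by simp
  have n0 : ‖(p : ℚ_[p]) * x 4‖ = (p : ℝ)⁻¹ * ‖x 4‖ := by simp
  have hRR : (p : ℝ) ^ (r + 1) = p * (p : ℝ) ^ r := pow_succ' _ _
  have e4 : ‖(p : ℚ_[p])⁻¹ * x 0‖ = (p : ℝ) ^ (r + 1) ↔ ‖x 0‖ = (p : ℝ) ^ r := by
    rw [n4, hRR, mul_right_inj' hpp.ne']
  simp only [Set.mem_ofPred_eq, cell, hS, Finset.forall_mem_insert, Finset.mem_singleton, forall_eq,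
    forall_fin5]
  constructor
  · rintro ⟨hx, ⟨h0, h1, h2, h3, h4⟩, -, h⟩
    have k0 : ‖(p : ℚ_[p]) * x 4‖ < (p : ℝ) ^ (r + 1) := lt_pow_succ.2 <| by
      rw [n0]
      exact (mul_le_of_le_one_left (norm_nonneg _) (inv_le_one_of_one_le₀ hp1.le)).trans h4
    have k1 := lt_pow_succ.2 h1
    have k2 := lt_pow_succ.2 h2
    have k3 := lt_pow_succ.2 h3
    have k4 := e4.2 h
    rw [dilM_apply]
    exact ⟨hx, ⟨k0.le, k1.le, by simpa using k2.le, k3.le, k4.le⟩, ⟨k3, k0, k1⟩, k4⟩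
  · rintro ⟨hx, ⟨-, -, -, -, h4⟩, ⟨k3, k0, k1⟩, h⟩
    -- The third coordinate of the image is not constrained by the cell, only by the equation.
    have hlt2 := lt_two hp hθ (Nat.le_add_left 1 r) (hS.2 hx)
      (mul_lt_left (norm_nonneg _) k0 h4) (mul_lt_left (norm_nonneg _) k1 k3.le)
    rw [dilM_apply] at h k3 k1 hlt2
    have h0 := e4.1 h
    have h1 := lt_pow_succ.1 k1
    have h2 : ‖x 2‖ ≤ (p : ℝ) ^ r := lt_pow_succ.1 (by simpa using hlt2)
    have h3 := lt_pow_succ.1 k3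
    refine ⟨hx, ⟨h0.le, h1, h2, h3, ?_⟩, by simp, h0⟩
    -- `x₅` is bounded by solving the equation for it, `x₁` having maximal norm.
    have e : 2 * x 0 * x 4 = 4 * θ + (-(2 * x 1 * x 3) + -(x 2 ^ 2)) := by
      linear_combination Ssph_eq hx
    have : ‖2 * x 0 * x 4‖ ≤ (p : ℝ) ^ r * (p : ℝ) ^ r := by
      rw [e]
      refine add_le ((norm_four_mul hp hθ).trans_le ?_) (add_le ?_ ?_)
      · have := one_le_pow₀ (n := r) hp1.le
        nlinarith
      · rw [norm_neg, norm_two_mul hp]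
        exact mul_le_mul h1 h3 (norm_nonneg _) hR.le
      · rw [norm_neg, norm_pow, sq]
        exact mul_le_mul h2 h2 (norm_nonneg _) hR.le
    rw [norm_two_mul hp, h0] at this
    exact le_of_mul_le_mul_left this hR

/-- Up to the common factor, the cells of `O_r` have the sizes `p`, `p²`, `p³` of the Bruhat cells. -/
lemma cells (hp : p ≠ 2) (hθ : ‖θ‖ = 1) {r : ℕ} (hr : 1 ≤ r) :
    μ (cell θ r {0, 1} 3) = p * μ (cell θ r {3, 0, 1} 4) ∧
    μ (cell θ r {0} 1) = p ^ 2 * μ (cell θ r {3, 0, 1} 4) ∧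
    μ (cell θ r ∅ 0) = p ^ 3 * μ (cell θ r {3, 0, 1} 4) := by
  have h3 : μ (cell θ r {0, 1} 3) = p * μ (cell θ r {3, 0, 1} 4) := by
    rw [cell_swap_three hinv, cell_four hinv]
  have h1 : μ (cell θ r {0} 1) = p ^ 2 * μ (cell θ r {3, 0, 1} 4) := by
    rw [cell_refl hinv, cell_three hinv hp, cell_two_zero hp hθ hr, h3]; ring
  refine ⟨h3, h1, ?_⟩
  rw [cell_swap_zero hinv, cell_one hinv, h1]; ring

lemma measure_Orb (hp : p ≠ 2) (hθ : ‖θ‖ = 1) {r : ℕ} (hr : 1 ≤ r) :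
    μ (Orb p θ r) = (1 + p + p ^ 2 + p ^ 3) * μ (cell θ r {3, 0, 1} 4) := by
  obtain ⟨h3, h1, h0⟩ := cells hinv hp hθ hr
  rw [Orb_eq hp hθ hr, measure_union, measure_union, measure_union, h3, h1, h0]
  · ring
  · exact cell_insert_disjoint θ r (by simp)
  · exact measurableSet_cell ..
  · exact Disjoint.union_right (cell_insert_disjoint θ r (by simp))
      (cell_insert_disjoint θ r (by simp))
  · exact (measurableSet_cell ..).union (measurableSet_cell ..)
  · exact Disjoint.union_right (cell_insert_disjoint θ r (by simp))
      (Disjoint.union_right (cell_insert_disjoint θ r (by simp))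
      (cell_insert_disjoint θ r (by simp)))
  · exact (measurableSet_cell ..).union ((measurableSet_cell ..).union (measurableSet_cell ..))

/-- `O₀` splits into its part with `x₁` a unit and its part with `x₁` small, in the ratio `p : 1`. -/
lemma measure_Orb_zero (hp : p ≠ 2) (hθ : ‖θ‖ = 1) (hns : ¬ ∃ s : ℚ_[p], s ^ 2 = θ) :
    μ (Orb p θ 0) = (p + 1) * μ (cell θ 0 {0} 1) := by
  rw [Orb_zero_eq hp hθ hns, measure_union (cell_insert_disjoint θ 0 (by simp))
    (measurableSet_cell ..), cell_swap_zero hinv, cell_one hinv]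
  ring

/-- The smallest cell of `O_{r+1}` is a dilate of the open cell of `O_r`, which is `p³` times the
smallest cell of `O_r` if `r ≥ 1` and `p` times `cell θ 0 {0} 1` if `r = 0`. -/
lemma measure_small_cell (hp : p ≠ 2) (hθ : ‖θ‖ = 1) (r : ℕ) :
    μ (cell θ (r + 1) {3, 0, 1} 4) = p ^ (3 * r + 1) * μ (cell θ 0 {0} 1) := by
  induction r with
  | zero => rw [← cell_dil hinv hp hθ, cell_swap_zero hinv, cell_one hinv]; simp
  | succ r ih =>
    rw [← cell_dil hinv hp hθ, (cells hinv hp hθ (Nat.le_add_left 1 r)).2.2, ih]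
    ring

end Step

end Stmt9

/-- non-split case: for a non-square unit `θ` and any `G`-invariant
measure `μ` concentrated on the sphere `S`, finite on each orbit `O_r` and positive
on `O₀`, one has `μ(O_r) = p^{3r}(1 + p^{−2})·μ(O₀)` for all `r ≥ 1`. -/
theorem stmt_9 (hp : p ≠ 2) (θ : ℚ_[p]) (hθunit : ‖θ‖ = 1)
    (hθns : ¬ ∃ s : ℚ_[p], s ^ 2 = θ) (μ : Measure (Fin 5 → ℚ_[p]))
    (hS : μ (Ssph p θ)ᶜ = 0)
    (hfin : ∀ r : ℕ, μ (Orb p θ r) < ⊤)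
    (hpos : 0 < μ (Orb p θ 0))
    (hinv : ∀ g ∈ SO32 p, Measure.map (fun v => g.mulVec v) μ = μ) :
    ∀ r : ℕ, 1 ≤ r →
      μ (Orb p θ r) = (p : ℝ≥0∞) ^ (3 * r) * (1 + ((p : ℝ≥0∞) ^ 2)⁻¹) * μ (Orb p θ 0) := by
  intro r hr
  obtain ⟨r, rfl⟩ := Nat.exists_eq_add_of_le' hr
  rw [Stmt9.measure_Orb hinv hp hθunit hr, Stmt9.measure_Orb_zero hinv hp hθunit hθns,
    Stmt9.measure_small_cell hinv hp hθunit]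
  have hp0 : (p : ℝ≥0∞) ≠ 0 := by exact_mod_cast (Fact.out : p.Prime).ne_zero
  have h : (p : ℝ≥0∞) ^ 2 * ((p : ℝ≥0∞) ^ 2)⁻¹ = 1 :=
    ENNReal.mul_inv_cancel (pow_ne_zero 2 hp0) (by simp)
  calc _ = (p : ℝ≥0∞) ^ (3 * r + 1) * ((p : ℝ≥0∞) ^ 2 + 1) *
        ((p + 1) * μ (Stmt9.cell θ 0 {0} 1)) := by ring
    _ = (p : ℝ≥0∞) ^ (3 * r + 1) * ((p : ℝ≥0∞) ^ 2 +
          (p : ℝ≥0∞) ^ 2 * ((p : ℝ≥0∞) ^ 2)⁻¹) *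
        ((p + 1) * μ (Stmt9.cell θ 0 {0} 1)) := by rw [h]
    _ = _ := by ring

end
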